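/- arXiv:2011.14452 — 6 statements merged into one kernel-verified Lean document; each statement's English description precedes it below -/
import Mathlib

section
/- Sufficiency direction of Theorem 1 (kernel part, odd case): Let H be a real inner product space, D ≥ 1, a : ℝ^D → H an atom map, K ∈ ℕ, M = 2K + 1, θ_1, …, θ_M ∈ ℝ^D, λ_0 > 0, λ_1, …, λ_K > 0 and ω_1, …, ω_K ∈ ℝ^D. Assume the Gram matrix G of {a(θ_j)}_{j=1}^M is invertible and satisfies G(l, j) = λ_0 + Σ_{k=1}^K λ_k cos(⟨ω_k, θ_l − θ_j⟩) for all l, j. Define c_m(θ) = λ_0 + Σ_{k=1}^K λ_k cos(⟨ω_k, θ − θ_m⟩), v_m = Σ_{j=1}^M G⁻¹(m, j) a(θ_j), and h(θ) = Σ_{m=1}^M c_m(θ) v_m. Then ⟨h(θ), h(θ')⟩ = λ_0 + Σ_{k=1}^K λ_k cos(⟨ω_k, θ − θ'⟩) for all θ, θ' ∈ ℝ^D. -/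
open RealInnerProductSpace

open Matrix

/-- If `P * Q` is invertible, with row and column index types of equal cardinality, then
`Q * (P * Q)⁻¹ * P = 1`. -/
theorem Matrix.mul_inv_mul_mul_eq_one {m n : Type*} [Fintype m] [DecidableEq m] [Fintype n]
    [DecidableEq n] (hmn : Fintype.card m = Fintype.card n) (P : Matrix m n ℝ) (Q : Matrix n m ℝ)
    (hPQ : IsUnit (P * Q).det) : Q * (P * Q)⁻¹ * P = 1 := by
  rw [← Matrix.mul_eq_one_comm_of_card_eq m n ℝ hmn, ← Matrix.mul_assoc]
  exact Matrix.mul_nonsing_inv _ hPQ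

/-- Vectors dual to a family with invertible Gram matrix `G` have Gram matrix `(G⁻¹)ᵀ`. -/
theorem inner_dual_dual {H ι : Type*} [NormedAddCommGroup H] [InnerProductSpace ℝ H]
    [Fintype ι] [DecidableEq ι] (b : ι → H) (G : Matrix ι ι ℝ) (hG : ∀ l j, G l j = ⟪b l, b j⟫)
    (hdet : IsUnit G.det) (m m' : ι) :
    ⟪∑ j, G⁻¹ m j • b j, ∑ j, G⁻¹ m' j • b j⟫ = G⁻¹ m' m := by
  have biorth : ∀ i, ⟪∑ j, G⁻¹ m j • b j, b i⟫ = (1 : Matrix ι ι ℝ) m i := fun i => by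
    rw [← Matrix.nonsing_inv_mul G hdet, Matrix.mul_apply, sum_inner]
    simp only [real_inner_smul_left, hG]
  rw [inner_sum]
  simp [real_inner_smul_right, biorth, Matrix.one_apply]

/-- Trigonometric features `1, cos ⟪ω k, t⟫, sin ⟪ω k, t⟫`. -/
noncomputable def trigFeature {E : Type*} [NormedAddCommGroup E] [InnerProductSpace ℝ E] {K : ℕ}
    (ω : Fin K → E) (t : E) : Unit ⊕ (Fin K ⊕ Fin K) → ℝ :=
  Sum.elim (fun _ => 1)
    (Sum.elim (fun k => Real.cos ⟪ω k, t⟫) (fun k => Real.sin ⟪ω k, t⟫))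

/-- The raised-cosine kernel is a weighted inner product of trigonometric features. -/
theorem trigFeature_dotProduct {E : Type*} [NormedAddCommGroup E] [InnerProductSpace ℝ E] {K : ℕ}
    (lam0 : ℝ) (lam : Fin K → ℝ) (ω : Fin K → E) (s t : E) :
    trigFeature ω s ⬝ᵥ (Sum.elim (fun _ => lam0) (Sum.elim lam lam) * trigFeature ω t) =
      lam0 + ∑ k, lam k * Real.cos ⟪ω k, s - t⟫ := by
  simp only [dotProduct, trigFeature, Fintype.sum_sum_type, Pi.mul_apply, Sum.elim_inl,
    Sum.elim_inr, Finset.univ_unique, Finset.sum_singleton, inner_sub_right, Real.cos_sub,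
    ← Finset.sum_add_distrib, one_mul, mul_one]
  congr 1
  exact Finset.sum_congr rfl fun k _ => by ring

/-- **Sufficiency direction of Theorem 1 (kernel part, odd case `M = 2K+1`).**
If the Gram matrix of `M = 2K+1` atoms is invertible and admits a raised-cosine
decomposition with `λ₀ > 0` and `λ_k > 0`, then the low-rank approximation
`h θ = ∑ m, c m θ • v m` reproduces the same raised-cosine kernel everywhere. -/
theorem lowrank_kernel_odd
    {H : Type*} [NormedAddCommGroup H] [InnerProductSpace ℝ H]
    {D : ℕ} (hD : 1 ≤ D) {K : ℕ}
    (a : EuclideanSpace ℝ (Fin D) → H)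
    (θ : Fin (2 * K + 1) → EuclideanSpace ℝ (Fin D))
    (lam0 : ℝ) (hlam0 : 0 < lam0)
    (lam : Fin K → ℝ) (hlam : ∀ k, 0 < lam k)
    (ω : Fin K → EuclideanSpace ℝ (Fin D))
    (G : Matrix (Fin (2 * K + 1)) (Fin (2 * K + 1)) ℝ)
    (hG : ∀ l j, G l j = ⟪a (θ l), a (θ j)⟫)
    (hGinv : Invertible G)
    (hdecomp : ∀ l j, G l j = lam0 + ∑ k : Fin K, lam k * Real.cos ⟪ω k, θ l - θ j⟫)
    (c : Fin (2 * K + 1) → EuclideanSpace ℝ (Fin D) → ℝ)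
    (hc : ∀ m t, c m t = lam0 + ∑ k : Fin K, lam k * Real.cos ⟪ω k, t - θ m⟫)
    (v : Fin (2 * K + 1) → H)
    (hv : ∀ m, v m = ∑ j : Fin (2 * K + 1), G⁻¹ m j • a (θ j))
    (h : EuclideanSpace ℝ (Fin D) → H)
    (hh : ∀ t, h t = ∑ m : Fin (2 * K + 1), c m t • v m) :
    ∀ t t' : EuclideanSpace ℝ (Fin D),
      ⟪h t, h t'⟫ = lam0 + ∑ k : Fin K, lam k * Real.cos ⟪ω k, t - t'⟫ := by
  intro t t'
  have hdet : IsUnit G.det := (Matrix.isUnit_iff_isUnit_det G).mp (isUnit_of_invertible G)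
  set w : Unit ⊕ (Fin K ⊕ Fin K) → ℝ := Sum.elim (fun _ => lam0) (Sum.elim lam lam)
  let P : Matrix (Fin (2 * K + 1)) (Unit ⊕ (Fin K ⊕ Fin K)) ℝ :=
    Matrix.of fun m => trigFeature ω (θ m)
  let Q : Matrix (Unit ⊕ (Fin K ⊕ Fin K)) (Fin (2 * K + 1)) ℝ :=
    Matrix.of fun n m => (w * trigFeature ω (θ m)) n
  have hPQ : G = P * Q := by
    ext l j
    rw [hdecomp, ← trigFeature_dotProduct]
    rfl
  have hQGP : Q * G⁻¹ * P = 1 := by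
    rw [hPQ] at hdet ⊢
    refine Matrix.mul_inv_mul_mul_eq_one ?_ P Q hdet
    simp only [Fintype.card_fin, Fintype.card_sum, Fintype.card_unit]
    ring
  have hcQ : ∀ s, (fun m => c m s) = trigFeature ω s ᵥ* Q := fun s => by
    ext m
    rw [hc, ← trigFeature_dotProduct]
    rfl
  have hcP : ∀ s, (fun m => c m s) = P *ᵥ (w * trigFeature ω s) := fun s => by
    ext m
    have hsymm : c m s = lam0 + ∑ k, lam k * Real.cos ⟪ω k, θ m - s⟫ := by
      rw [hc]
      congr 1
      refine Finset.sum_congr rfl fun k _ => ?_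
      rw [← neg_sub, inner_neg_right, Real.cos_neg]
    rw [hsymm, ← trigFeature_dotProduct]
    rfl
  have hvv : ∀ m m', ⟪v m, v m'⟫ = G⁻¹ m' m := fun m m' => by
    rw [hv, hv]
    exact inner_dual_dual (fun j => a (θ j)) G hG hdet m m'
  have hinner : ⟪h t', h t⟫ = (fun m => c m t) ⬝ᵥ (G⁻¹ *ᵥ fun m => c m t') := by
    simp only [hh, sum_inner, inner_sum, real_inner_smul_left, real_inner_smul_right, hvv,
      dotProduct, Matrix.mulVec, Finset.mul_sum]
    exact Finset.sum_congr rfl fun _ _ => Finset.sum_congr rfl fun _ _ => by ring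
  rw [real_inner_comm, hinner, hcQ t, hcP t', ← Matrix.dotProduct_mulVec, Matrix.mulVec_mulVec,
    Matrix.mulVec_mulVec, hQGP, Matrix.one_mulVec, trigFeature_dotProduct]
end

section
/- Sufficiency direction of Theorem 1 (kernel part, even case): Let H be a real inner product space, D ≥ 1, a : ℝ^D → H an atom map, K ≥ 1, M = 2K, θ_1, …, θ_M ∈ ℝ^D, λ_1, …, λ_K > 0 and ω_1, …, ω_K ∈ ℝ^D. Assume the Gram matrix G of {a(θ_j)}_{j=1}^M is invertible and satisfies G(l, j) = Σ_{k=1}^K λ_k cos(⟨ω_k, θ_l − θ_j⟩) for all l, j. Define c_m(θ) = Σ_{k=1}^K λ_k cos(⟨ω_k, θ − θ_m⟩), v_m = Σ_{j=1}^M G⁻¹(m, j) a(θ_j), and h(θ) = Σ_{m=1}^M c_m(θ) v_m. Then ⟨h(θ), h(θ')⟩ = Σ_{k=1}^K λ_k cos(⟨ω_k, θ − θ'⟩) for all θ, θ' ∈ ℝ^D. -/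
open RealInnerProductSpace
open scoped Matrix

/-- If `G = F * diagonal d * Fᵀ` is invertible and `F` has as many columns as rows, then the
quadratic form of `G⁻¹` at vectors in the image of `F * diagonal d` is the form of `d`. -/
lemma Matrix.vecMul_inv_dotProduct_of_eq_mul_diagonal_mul_transpose
    {m n R : Type*} [Fintype m] [DecidableEq m] [Fintype n] [DecidableEq n] [CommRing R]
    (e : m ≃ n) (F : Matrix m n R) (d : n → R) (G : Matrix m m R) [Invertible G]
    (hG : G = F * Matrix.diagonal d * Fᵀ) (x y : n → R) :
    (((F * Matrix.diagonal d) *ᵥ x) ᵥ* G⁻¹) ⬝ᵥ ((F * Matrix.diagonal d) *ᵥ y) =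
      ∑ i, d i * (x i * y i) := by
  have hright : (F * Matrix.diagonal d) * (Fᵀ * G⁻¹) = 1 := by
    rw [← Matrix.mul_assoc, ← hG, Matrix.mul_inv_of_invertible]
  have hleft : Fᵀ * G⁻¹ * (F * Matrix.diagonal d) = 1 :=
    (Matrix.mul_eq_one_comm_of_equiv e).1 hright
  have hx : (F * Matrix.diagonal d) *ᵥ x = (Matrix.diagonal d *ᵥ x) ᵥ* Fᵀ := by
    rw [Matrix.vecMul_transpose, Matrix.mulVec_mulVec]
  rw [hx, Matrix.vecMul_vecMul, Matrix.dotProduct_mulVec, Matrix.vecMul_vecMul, hleft,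
    Matrix.vecMul_one]
  simp [dotProduct, Matrix.mulVec_diagonal, mul_assoc]

/-- The inner product of two linear combinations of a family whose Gram matrix is `G`, with
coefficients `x ᵥ* G⁻¹` and `y ᵥ* G⁻¹`. -/
lemma inner_sum_vecMul_gram_inv
    {H ι : Type*} [NormedAddCommGroup H] [InnerProductSpace ℝ H] [Fintype ι] [DecidableEq ι]
    (u : ι → H) (G : Matrix ι ι ℝ) [Invertible G] (hG : ∀ i j, G i j = ⟪u i, u j⟫)
    (x y : ι → ℝ) :
    ⟪∑ i, (x ᵥ* G⁻¹) i • u i, ∑ j, (y ᵥ* G⁻¹) j • u j⟫ = (x ᵥ* G⁻¹) ⬝ᵥ y := by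
  have hsymm : Gᵀ = G := by
    ext i j
    rw [Matrix.transpose_apply, hG, hG, real_inner_comm]
  have hy : G *ᵥ (y ᵥ* G⁻¹) = y := by
    rw [← Matrix.vecMul_transpose, hsymm, Matrix.vecMul_vecMul,
      Matrix.inv_mul_of_invertible, Matrix.vecMul_one]
  calc _ = (x ᵥ* G⁻¹) ⬝ᵥ (G *ᵥ (y ᵥ* G⁻¹)) := by
        simp only [sum_inner, inner_sum, real_inner_smul_left, real_inner_smul_right, ← hG]
        simp only [dotProduct, Matrix.mulVec, Finset.mul_sum]
        rw [Finset.sum_comm]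
        refine Finset.sum_congr rfl fun i _ => Finset.sum_congr rfl fun j _ => ?_
        ring
    _ = _ := by rw [hy]

/-- The cosine and sine features of a point `t` at the frequencies `ω`. -/
noncomputable def trigFeatures {E κ : Type*} [NormedAddCommGroup E] [InnerProductSpace ℝ E]
    (ω : κ → E) (t : E) : κ ⊕ κ → ℝ :=
  Sum.elim (fun k => Real.cos ⟪ω k, t⟫) (fun k => Real.sin ⟪ω k, t⟫)

lemma sum_mul_trigFeatures {E κ : Type*} [NormedAddCommGroup E] [InnerProductSpace ℝ E]
    [Fintype κ] (ω : κ → E) (lam : κ → ℝ) (s t : E) :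
    ∑ i, Sum.elim lam lam i * (trigFeatures ω s i * trigFeatures ω t i) =
      ∑ k, lam k * Real.cos ⟪ω k, s - t⟫ := by
  simp only [Fintype.sum_sum_type, trigFeatures, Sum.elim_inl, Sum.elim_inr, inner_sub_right,
    Real.cos_sub, mul_add, Finset.sum_add_distrib]

/-- **Sufficiency direction of Theorem 1 (kernel part, even case `M = 2K`).**
If the Gram matrix of `M = 2K` atoms is invertible and admits a raised-cosine
decomposition with zero offset (`λ₀ = 0`) and `λ_k > 0`, then the low-rank
approximation `h θ = ∑ m, c m θ • v m` reproduces the same kernel everywhere. -/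
theorem lowrank_kernel_even
    {H : Type*} [NormedAddCommGroup H] [InnerProductSpace ℝ H]
    {D : ℕ} (hD : 1 ≤ D) {K : ℕ} (hK : 1 ≤ K)
    (a : EuclideanSpace ℝ (Fin D) → H)
    (θ : Fin (2 * K) → EuclideanSpace ℝ (Fin D))
    (lam : Fin K → ℝ) (hlam : ∀ k, 0 < lam k)
    (ω : Fin K → EuclideanSpace ℝ (Fin D))
    (G : Matrix (Fin (2 * K)) (Fin (2 * K)) ℝ)
    (hG : ∀ l j, G l j = ⟪a (θ l), a (θ j)⟫)
    (hGinv : Invertible G)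
    (hdecomp : ∀ l j, G l j = ∑ k : Fin K, lam k * Real.cos ⟪ω k, θ l - θ j⟫)
    (c : Fin (2 * K) → EuclideanSpace ℝ (Fin D) → ℝ)
    (hc : ∀ m t, c m t = ∑ k : Fin K, lam k * Real.cos ⟪ω k, t - θ m⟫)
    (v : Fin (2 * K) → H)
    (hv : ∀ m, v m = ∑ j : Fin (2 * K), G⁻¹ m j • a (θ j))
    (h : EuclideanSpace ℝ (Fin D) → H)
    (hh : ∀ t, h t = ∑ m : Fin (2 * K), c m t • v m) :
    ∀ t t' : EuclideanSpace ℝ (Fin D),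
      ⟪h t, h t'⟫ = ∑ k : Fin K, lam k * Real.cos ⟪ω k, t - t'⟫ := by
  intro t t'
  let F : Matrix (Fin (2 * K)) (Fin K ⊕ Fin K) ℝ := Matrix.of fun m => trigFeatures ω (θ m)
  let d : Fin K ⊕ Fin K → ℝ := Sum.elim lam lam
  have hFG : G = F * Matrix.diagonal d * Fᵀ := by
    ext l j
    rw [hdecomp, ← sum_mul_trigFeatures, Matrix.mul_apply]
    refine Finset.sum_congr rfl fun i _ => ?_
    simp only [Matrix.mul_diagonal, Matrix.transpose_apply, F, d, Matrix.of_apply]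
    ring
  have hcF : ∀ s, (fun m => c m s) = (F * Matrix.diagonal d) *ᵥ trigFeatures ω s := by
    intro s
    ext m
    rw [hc, ← sum_mul_trigFeatures, Matrix.mulVec, dotProduct]
    refine Finset.sum_congr rfl fun i _ => ?_
    simp only [Matrix.mul_diagonal, F, d, Matrix.of_apply]
    ring
  have hcomb : ∀ s, h s = ∑ j, ((fun m => c m s) ᵥ* G⁻¹) j • a (θ j) := by
    intro s
    simp only [hh, hv, Finset.smul_sum, smul_smul, Matrix.vecMul, dotProduct, Finset.sum_smul]
    exact Finset.sum_comm
  have e : Fin (2 * K) ≃ Fin K ⊕ Fin K := (finCongr (two_mul K)).trans finSumFinEquiv.symm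
  rw [hcomb, hcomb, inner_sum_vecMul_gram_inv (fun j => a (θ j)) G hG, hcF, hcF,
    Matrix.vecMul_inv_dotProduct_of_eq_mul_diagonal_mul_transpose e F d G hFG,
    sum_mul_trigFeatures]
end

section
/- Combined sufficiency (Theorem 1, converse, odd case): Under the hypotheses that M = 2K + 1, λ_0 > 0, λ_1, …, λ_K > 0, the Gram matrix G of {a(θ_j)}_{j=1}^M is invertible and G(l, j) = λ_0 + Σ_{k=1}^K λ_k cos(⟨ω_k, θ_l − θ_j⟩) for all l, j, the low-rank approximation h(θ) = Σ_{m=1}^M c_m(θ) v_m with c_m(θ) = λ_0 + Σ_{k=1}^K λ_k cos(⟨ω_k, θ − θ_m⟩) and v_m = Σ_{j=1}^M G⁻¹(m, j) a(θ_j) simultaneously (i) interpolates all atoms, h(θ_j) = a(θ_j) for j = 1, …, M, and (ii) satisfies the raised-cosine kernel identity ⟨h(θ), h(θ')⟩ = λ_0 + Σ_{k=1}^K λ_k cos(⟨ω_k, θ − θ'⟩) for all θ, θ' ∈ ℝ^D. -/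
open RealInnerProductSpace

open Matrix in
/-- If a square factorization `F * B` is invertible, then `B * (F * B)⁻¹ * F = 1`, here in
bilinear form. -/
theorem Matrix.vecMul_dotProduct_inv_mulVec_of_card_eq {m n R : Type*} [Fintype m] [Fintype n]
    [DecidableEq m] [DecidableEq n] [CommRing R] (hcard : Fintype.card m = Fintype.card n)
    (F : Matrix m n R) (B : Matrix n m R) (hFB : IsUnit (F * B).det) (x y : n → R) :
    (x ᵥ* B ᵥ* (F * B)⁻¹) ⬝ᵥ (F *ᵥ y) = x ⬝ᵥ y := by
  have hright : F * (B * (F * B)⁻¹) = 1 := by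
    rw [← Matrix.mul_assoc, Matrix.mul_nonsing_inv _ hFB]
  have hleft : B * (F * B)⁻¹ * F = 1 := (Matrix.mul_eq_one_comm_of_card_eq _ _ _ hcard).mp hright
  rw [Matrix.dotProduct_mulVec, Matrix.vecMul_vecMul, Matrix.vecMul_vecMul, ← Matrix.mul_assoc,
    hleft, Matrix.vecMul_one]

/-- The interpolant built from dual vectors of an invertible Gram matrix reproduces any kernel
whose feature dimension equals the number of atoms. -/
theorem dual_interpolant_interp_and_kernel {H X m n : Type*} [NormedAddCommGroup H]
    [InnerProductSpace ℝ H] [Fintype m] [Fintype n] [DecidableEq m]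
    (hcard : Fintype.card m = Fintype.card n) (b : m → H) (p : m → X)
    (κ : X → X → ℝ) (φ ψ : n → X → ℝ) (hκ : ∀ s t, κ s t = ∑ i, φ i s * ψ i t)
    (hsymm : ∀ s t, κ s t = κ t s) (G : Matrix m m ℝ) (hG : ∀ l j, G l j = ⟪b l, b j⟫)
    (hdet : IsUnit G.det) (hGκ : ∀ l j, G l j = κ (p l) (p j)) (v : m → H)
    (hv : ∀ i, v i = ∑ j, G⁻¹ i j • b j) (h : X → H)
    (hh : ∀ t, h t = ∑ i, κ t (p i) • v i) :
    (∀ j, h (p j) = b j) ∧ ∀ s t, ⟪h s, h t⟫ = κ s t := by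
  classical
  have hexpand : ∀ t, h t = ∑ l, Matrix.vecMul (fun i => κ t (p i)) G⁻¹ l • b l := by
    intro t
    simp only [hh, hv, Finset.smul_sum, smul_smul, Matrix.vecMul, dotProduct, Finset.sum_smul]
    exact Finset.sum_comm
  have hdual : ∀ j i, ⟪b j, v i⟫ = (1 : Matrix m m ℝ) i j := by
    intro j i
    rw [← Matrix.nonsing_inv_mul G hdet, Matrix.mul_apply, hv, inner_sum]
    simp only [inner_smul_right, hG, real_inner_comm]
  have hsample : ∀ j t, ⟪b j, h t⟫ = κ (p j) t := by
    intro j t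
    simp [hh, inner_sum, inner_smul_right, hdual, Matrix.one_apply, hsymm t]
  refine ⟨fun j => ?_, fun s t => ?_⟩
  · have hrow : (fun i => κ (p j) (p i)) = G.row j := by
      funext i
      exact (hGκ j i).symm
    have hone : Matrix.vecMul (G.row j) G⁻¹ = (1 : Matrix m m ℝ).row j := by
      rw [← Matrix.mul_nonsing_inv G hdet]
      rfl
    rw [hexpand, hrow, hone]
    simp [Matrix.row, Matrix.one_apply]
  · let F : Matrix m n ℝ := Matrix.of fun l i => φ i (p l)
    let B : Matrix n m ℝ := Matrix.of fun i l => ψ i (p l)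
    have hFB : G = F * B := by
      ext l j
      rw [hGκ, hκ, Matrix.mul_apply]
      rfl
    have hs : (fun i => κ s (p i)) = Matrix.vecMul (fun i => φ i s) B := by
      funext i
      exact hκ s (p i)
    have key := Matrix.vecMul_dotProduct_inv_mulVec_of_card_eq hcard F B (hFB ▸ hdet)
      (fun i => φ i s) (fun i => ψ i t)
    rw [← hs, ← hFB] at key
    rw [hexpand s, sum_inner, hκ s t]
    refine Eq.trans (Finset.sum_congr rfl fun l _ => ?_) key
    rw [real_inner_smul_left, hsample, hκ]
    rfl

/-- **Combined sufficiency (Theorem 1, converse, odd case `M = 2K+1`).**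
Under the raised-cosine decomposition of an invertible Gram matrix (with `λ₀ > 0`,
`λ_k > 0`), the low-rank approximation `h θ = ∑ m, c m θ • v m` simultaneously
interpolates all atoms and satisfies the raised-cosine kernel identity. -/
theorem lowrank_interp_and_kernel_odd
    {H : Type*} [NormedAddCommGroup H] [InnerProductSpace ℝ H]
    {D : ℕ} (hD : 1 ≤ D) {K : ℕ}
    (a : EuclideanSpace ℝ (Fin D) → H)
    (θ : Fin (2 * K + 1) → EuclideanSpace ℝ (Fin D))
    (lam0 : ℝ) (hlam0 : 0 < lam0)
    (lam : Fin K → ℝ) (hlam : ∀ k, 0 < lam k)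
    (ω : Fin K → EuclideanSpace ℝ (Fin D))
    (G : Matrix (Fin (2 * K + 1)) (Fin (2 * K + 1)) ℝ)
    (hG : ∀ l j, G l j = ⟪a (θ l), a (θ j)⟫)
    (hGinv : Invertible G)
    (hdecomp : ∀ l j, G l j = lam0 + ∑ k : Fin K, lam k * Real.cos ⟪ω k, θ l - θ j⟫)
    (c : Fin (2 * K + 1) → EuclideanSpace ℝ (Fin D) → ℝ)
    (hc : ∀ m t, c m t = lam0 + ∑ k : Fin K, lam k * Real.cos ⟪ω k, t - θ m⟫)
    (v : Fin (2 * K + 1) → H)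
    (hv : ∀ m, v m = ∑ j : Fin (2 * K + 1), G⁻¹ m j • a (θ j))
    (h : EuclideanSpace ℝ (Fin D) → H)
    (hh : ∀ t, h t = ∑ m : Fin (2 * K + 1), c m t • v m) :
    (∀ j, h (θ j) = a (θ j)) ∧
      (∀ t t' : EuclideanSpace ℝ (Fin D),
        ⟪h t, h t'⟫ = lam0 + ∑ k : Fin K, lam k * Real.cos ⟪ω k, t - t'⟫) := by
  refine dual_interpolant_interp_and_kernel (n := Unit ⊕ Fin K ⊕ Fin K) (by simp; ring)
    (fun j => a (θ j)) θ (fun s t => lam0 + ∑ k, lam k * Real.cos ⟪ω k, s - t⟫)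
    (Sum.elim (fun _ _ => 1)
      (Sum.elim (fun k t => Real.cos ⟪ω k, t⟫) (fun k t => Real.sin ⟪ω k, t⟫)))
    (Sum.elim (fun _ _ => lam0)
      (Sum.elim (fun k t => lam k * Real.cos ⟪ω k, t⟫) (fun k t => lam k * Real.sin ⟪ω k, t⟫)))
    (fun s t => ?_) (fun s t => ?_) G hG (Matrix.isUnit_det_of_invertible G) hdecomp v hv h
    (fun t => ?_)
  · simp only [Fintype.sum_sum_type, Sum.elim_inl, Sum.elim_inr, inner_sub_right, Real.cos_sub,
      ← Finset.sum_add_distrib]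
    simp only [Finset.univ_unique, Finset.sum_singleton, one_mul]
    congr 1
    exact Finset.sum_congr rfl fun k _ => by ring
  · simp only [← neg_sub t s, inner_neg_right, Real.cos_neg]
  · simp only [hh, hc]
end

section
/- Dimension constraint (consistency of the parameters, odd bound): Let H be a real inner product space, D ≥ 1, K ∈ ℕ, λ_0, λ_1, …, λ_K ∈ ℝ and ω_1, …, ω_K ∈ ℝ^D. Suppose h : ℝ^D → H satisfies ⟨h(θ), h(θ')⟩ = λ_0 + Σ_{k=1}^K λ_k cos(⟨ω_k, θ − θ'⟩) for all θ, θ' ∈ ℝ^D. Then any family h(θ_1), …, h(θ_M) with M > 2K + 1 is linearly dependent in H; equivalently, if h(θ_1), …, h(θ_M) are linearly independent then M ≤ 2K + 1. -/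
open RealInnerProductSpace

/-- If the Gram matrix of a linearly independent family factors through `κ → ℝ`, then the left
factor is linearly independent. -/
theorem LinearIndependent.of_inner_eq_sum_mul {H ι κ : Type*} [NormedAddCommGroup H]
    [InnerProductSpace ℝ H] [Fintype ι] [Fintype κ] {x : ι → H} (hx : LinearIndependent ℝ x)
    (φ ψ : ι → κ → ℝ) (hφψ : ∀ i j, ⟪x i, x j⟫ = ∑ a, φ i a * ψ j a) :
    LinearIndependent ℝ φ := by
  rw [Fintype.linearIndependent_iff] at hx ⊢
  intro c hc
  refine hx c ?_
  have horth : ∀ j, ⟪∑ i, c i • x i, x j⟫ = 0 := by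
    intro j
    calc ⟪∑ i, c i • x i, x j⟫ = ∑ i, ∑ a, c i * (φ i a * ψ j a) := by
          simp [sum_inner, real_inner_smul_left, hφψ, Finset.mul_sum]
      _ = ∑ a, (∑ i, c i • φ i) a * ψ j a := by
          rw [Finset.sum_comm]
          simp [Finset.sum_mul, mul_assoc]
      _ = 0 := by rw [hc]; simp
  rw [← inner_self_eq_zero (𝕜 := ℝ), inner_sum]
  simp [real_inner_smul_right, horth]

/-- **Dimension constraint (odd bound).** If the inner-product kernel of `h` is a
raised-cosine kernel with `K` cosine terms, then any family of more than `2K + 1`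
atoms `h (θ j)` is linearly dependent. -/
theorem raisedCosine_linear_dependent_of_gt
    {H : Type*} [NormedAddCommGroup H] [InnerProductSpace ℝ H]
    {D : ℕ} (hD : 1 ≤ D) {K : ℕ}
    (lam0 : ℝ) (lam : Fin K → ℝ) (ω : Fin K → EuclideanSpace ℝ (Fin D))
    (h : EuclideanSpace ℝ (Fin D) → H)
    (hker : ∀ t t' : EuclideanSpace ℝ (Fin D),
      ⟪h t, h t'⟫ = lam0 + ∑ k : Fin K, lam k * Real.cos ⟪ω k, t - t'⟫) :
    ∀ (M : ℕ) (θ : Fin M → EuclideanSpace ℝ (Fin D)),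
      2 * K + 1 < M → ¬ LinearIndependent ℝ (fun j : Fin M => h (θ j)) := by
  intro M θ hM hli
  let φ : Fin M → Option (Fin K ⊕ Fin K) → ℝ := fun j a => a.elim lam0
    (Sum.elim (fun k => lam k * Real.cos ⟪ω k, θ j⟫) (fun k => lam k * Real.sin ⟪ω k, θ j⟫))
  let ψ : Fin M → Option (Fin K ⊕ Fin K) → ℝ := fun j a => a.elim 1
    (Sum.elim (fun k => Real.cos ⟪ω k, θ j⟫) (fun k => Real.sin ⟪ω k, θ j⟫))
  have hφ : LinearIndependent ℝ φ := by
    refine hli.of_inner_eq_sum_mul φ ψ fun i j => ?_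
    simp [φ, ψ, hker, inner_sub_right, Real.cos_sub, mul_add, Finset.sum_add_distrib, mul_assoc]
  have hcard := hφ.fintype_card_le_finrank
  simp only [Fintype.card_fin, Module.finrank_fintype_fun_eq_card, Fintype.card_option,
    Fintype.card_sum] at hcard
  omega
end

section
/- Dimension constraint (consistency of the parameters, even case): Let H be a real inner product space, D ≥ 1, K ∈ ℕ, λ_1, …, λ_K ∈ ℝ and ω_1, …, ω_K ∈ ℝ^D. Suppose h : ℝ^D → H satisfies ⟨h(θ), h(θ')⟩ = Σ_{k=1}^K λ_k cos(⟨ω_k, θ − θ'⟩) for all θ, θ' ∈ ℝ^D (i.e., the raised-cosine kernel with offset λ_0 = 0). Then any family h(θ_1), …, h(θ_M) with M > 2K is linearly dependent in H; equivalently, if h(θ_1), …, h(θ_M) are linearly independent then M ≤ 2K. -/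
open RealInnerProductSpace

/-- A family of vectors whose Gram matrix factors through a space of dimension smaller than the
number of vectors is linearly dependent. -/
theorem not_linearIndependent_of_inner_eq_sum {H ι κ : Type*} [NormedAddCommGroup H]
    [InnerProductSpace ℝ H] [Fintype ι] [Fintype κ] (v : ι → H) (φ : ι → κ → ℝ) (ψ : κ → ι → ℝ)
    (hv : ∀ i j, ⟪v i, v j⟫ = ∑ s, φ i s * ψ s j) (hcard : Fintype.card κ < Fintype.card ι) :
    ¬ LinearIndependent ℝ v := by
  intro hli
  have hdep : ¬ LinearIndependent ℝ φ := fun hφ => by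
    have := hφ.fintype_card_le_finrank
    rw [Module.finrank_fintype_fun_eq_card] at this
    omega
  obtain ⟨c, hc, i, hi⟩ := Fintype.not_linearIndependent_iff.mp hdep
  refine hi (Fintype.linearIndependent_iff.mp hli c ?_ i)
  have horth : ∀ j, ⟪∑ i, c i • v i, v j⟫ = 0 := fun j => by
    have hs : ∀ s, ∑ i, c i * φ i s = 0 := fun s => by
      simpa using congrFun hc s
    calc ⟪∑ i, c i • v i, v j⟫ = ∑ i, ∑ s, c i * φ i s * ψ s j := by
          simp only [sum_inner, real_inner_smul_left, hv, Finset.mul_sum, mul_assoc]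
      _ = ∑ s, (∑ i, c i * φ i s) * ψ s j := by
          rw [Finset.sum_comm]
          simp only [Finset.sum_mul]
      _ = 0 := by simp [hs]
  refine inner_self_eq_zero (𝕜 := ℝ).mp ?_
  rw [inner_sum]
  simp [real_inner_smul_right, horth]

/-- **Dimension constraint (even case, zero offset).** If the inner-product kernel of
`h` is a raised-cosine kernel with `K` cosine terms and zero offset (`λ₀ = 0`), then
any family of more than `2K` atoms `h (θ j)` is linearly dependent. -/
theorem raisedCosine_zeroOffset_linear_dependent_of_gt
    {H : Type*} [NormedAddCommGroup H] [InnerProductSpace ℝ H]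
    {D : ℕ} (hD : 1 ≤ D) {K : ℕ}
    (lam : Fin K → ℝ) (ω : Fin K → EuclideanSpace ℝ (Fin D))
    (h : EuclideanSpace ℝ (Fin D) → H)
    (hker : ∀ t t' : EuclideanSpace ℝ (Fin D),
      ⟪h t, h t'⟫ = ∑ k : Fin K, lam k * Real.cos ⟪ω k, t - t'⟫) :
    ∀ (M : ℕ) (θ : Fin M → EuclideanSpace ℝ (Fin D)),
      2 * K < M → ¬ LinearIndependent ℝ (fun j : Fin M => h (θ j)) := by
  intro M θ hM
  refine not_linearIndependent_of_inner_eq_sum (κ := Fin K ⊕ Fin K) _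
    (fun j => Sum.elim (fun k => Real.cos ⟪ω k, θ j⟫) (fun k => Real.sin ⟪ω k, θ j⟫))
    (fun s j => Sum.elim (fun k => lam k * Real.cos ⟪ω k, θ j⟫)
      (fun k => lam k * Real.sin ⟪ω k, θ j⟫) s) (fun i j => ?_) ?_
  · simp only [hker, Fintype.sum_sum_type, Sum.elim_inl, Sum.elim_inr, ← Finset.sum_add_distrib,
      inner_sub_right, Real.cos_sub]
    exact Finset.sum_congr rfl fun k _ => by ring
  · simp only [Fintype.card_sum, Fintype.card_fin]
    omega
end

section
/- Necessary parity constraint on the offset: Let H be a real inner product space, D ≥ 1, K ∈ ℕ, λ_0, λ_1, …, λ_K ∈ ℝ with λ_k ≥ 0 for all k, and ω_1, …, ω_K ∈ ℝ^D. Suppose h : ℝ^D → H satisfies ⟨h(θ), h(θ')⟩ = λ_0 + Σ_{k=1}^K λ_k cos(⟨ω_k, θ − θ'⟩) for all θ, θ', and suppose there exist θ_1, …, θ_M ∈ ℝ^D with M = 2K + 1 such that h(θ_1), …, h(θ_M) are linearly independent. Then λ_0 > 0. -/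
open RealInnerProductSpace

/-- Any `2K + 1` points satisfy a nontrivial linear relation that annihilates the cosines and
sines of `K` given phase functions. -/
lemma exists_ne_zero_sum_cos_eq_zero_and_sum_sin_eq_zero {K : ℕ}
    (φ : Fin K → Fin (2 * K + 1) → ℝ) :
    ∃ g : Fin (2 * K + 1) → ℝ, g ≠ 0 ∧
      ∀ k, ∑ j, g j * Real.cos (φ k j) = 0 ∧ ∑ j, g j * Real.sin (φ k j) = 0 := by
  let v : Fin (2 * K + 1) → (Fin K ⊕ Fin K → ℝ) := fun j =>
    Sum.elim (fun k => Real.cos (φ k j)) (fun k => Real.sin (φ k j))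
  have hv : ¬ LinearIndependent ℝ v := fun hv => by
    have := hv.fintype_card_le_finrank
    simp at this
    omega
  obtain ⟨g, hg, i, hi⟩ := Fintype.not_linearIndependent_iff.1 hv
  refine ⟨g, fun h0 => hi (congrFun h0 i), fun k => ⟨?_, ?_⟩⟩
  · simpa [v, Finset.sum_apply] using congrFun hg (Sum.inl k)
  · simpa [v, Finset.sum_apply] using congrFun hg (Sum.inr k)

/-- **Necessary parity constraint on the offset.** If the inner-product kernel of `h`
is a raised-cosine kernel with nonnegative coefficients and there exist `M = 2K + 1`
parameters whose atoms `h (θ j)` are linearly independent, then the offset `λ₀` must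
be strictly positive. -/
theorem raisedCosine_offset_pos_of_odd_linearIndependent
    {H : Type*} [NormedAddCommGroup H] [InnerProductSpace ℝ H]
    {D : ℕ} (hD : 1 ≤ D) {K : ℕ}
    (lam0 : ℝ) (hlam0 : 0 ≤ lam0)
    (lam : Fin K → ℝ) (hlam : ∀ k, 0 ≤ lam k)
    (ω : Fin K → EuclideanSpace ℝ (Fin D))
    (h : EuclideanSpace ℝ (Fin D) → H)
    (hker : ∀ t t' : EuclideanSpace ℝ (Fin D),
      ⟪h t, h t'⟫ = lam0 + ∑ k : Fin K, lam k * Real.cos ⟪ω k, t - t'⟫)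
    (θ : Fin (2 * K + 1) → EuclideanSpace ℝ (Fin D))
    (hli : LinearIndependent ℝ (fun j : Fin (2 * K + 1) => h (θ j))) :
    0 < lam0 := by
  refine hlam0.lt_of_ne' fun h0 => ?_
  obtain ⟨g, hg, hφ⟩ :=
    exists_ne_zero_sum_cos_eq_zero_and_sum_sin_eq_zero fun k j => ⟪ω k, θ j⟫
  have horth : ∀ t, ⟪∑ j, g j • h (θ j), h t⟫ = 0 := fun t => by
    simp only [sum_inner, real_inner_smul_left, hker, h0, zero_add, Finset.mul_sum]
    rw [Finset.sum_comm]
    refine Finset.sum_eq_zero fun k _ => ?_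
    calc ∑ j, g j * (lam k * Real.cos ⟪ω k, θ j - t⟫)
        = lam k * Real.cos ⟪ω k, t⟫ * ∑ j, g j * Real.cos ⟪ω k, θ j⟫
          + lam k * Real.sin ⟪ω k, t⟫ * ∑ j, g j * Real.sin ⟪ω k, θ j⟫ := by
          rw [Finset.mul_sum, Finset.mul_sum, ← Finset.sum_add_distrib]
          refine Finset.sum_congr rfl fun j _ => ?_
          rw [inner_sub_right, Real.cos_sub]
          ring
      _ = 0 := by rw [(hφ k).1, (hφ k).2, mul_zero, mul_zero, add_zero]
  have hzero : ∑ j, g j • h (θ j) = 0 := by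
    rw [← inner_self_eq_zero (𝕜 := ℝ), inner_sum]
    exact Finset.sum_eq_zero fun j _ => by rw [real_inner_smul_right, horth, mul_zero]
  exact hg (funext (Fintype.linearIndependent_iff.1 hli g hzero))
end
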